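/- arXiv:1907.05457 — 5 statements merged into one kernel-verified Lean document; each statement's English description precedes it below -/
import Mathlib

section
/- Let B be an n×k real matrix with rows b_1,…,b_n such that every column of B has at most k non-zero entries, and let x ∈ ℝ^k be a vector such that ‖x‖₂ ≥ ‖b_i‖₂ for all i ∈ {1,…,n}. Then ∑_{i=1}^n |⟨x, b_i⟩| ≤ k^{3/2}·‖x‖₂². -/
/-!
Bounding each `|⟨x, b_i⟩|` by `∑ j, |x_j| |B_ij|` and summing over `i` first leaves
`∑ j, |x_j| ‖B e_j‖₁`. A column has at most `k` nonzero entries, each at most `‖x‖₂` in absolute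
value, so the sum is at most `k ‖x‖₂ ‖x‖₁`, and Cauchy–Schwarz gives `‖x‖₁ ≤ √k ‖x‖₂`.
-/

open Finset
open scoped Matrix

variable {ι κ E R : Type*}

theorem sum_le_sqrt_card_mul_sqrt_sum_sq (s : Finset ι) (f : ι → ℝ) :
    ∑ i ∈ s, f i ≤ √(#s) * √(∑ i ∈ s, f i ^ 2) := by
  simpa using Real.sum_mul_le_sqrt_mul_sqrt s 1 f

theorem sum_norm_le_card_ne_zero_mul [SeminormedAddGroup E] [DecidableEq E] {s : Finset ι}
    {v : ι → E} {M : ℝ} (hv : ∀ i ∈ s, ‖v i‖ ≤ M) :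
    ∑ i ∈ s, ‖v i‖ ≤ #{i ∈ s | v i ≠ 0} * M := by
  have restrict_support : ∑ i ∈ s with v i ≠ 0, ‖v i‖ = ∑ i ∈ s, ‖v i‖ :=
    sum_filter_of_ne fun i _ hi hvi ↦ hi (by rw [hvi, norm_zero])
  rw [← restrict_support, ← nsmul_eq_mul]
  exact sum_le_card_nsmul _ _ _ fun i hi ↦ hv i (mem_of_mem_filter i hi)

variable [Fintype ι] [Fintype κ] [NonUnitalSeminormedRing R]

theorem sum_norm_dotProduct_le_mul_sum_norm (x : κ → R) {B : Matrix ι κ R} {C : ℝ}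
    (hB : ∀ j, ∑ i, ‖B i j‖ ≤ C) :
    ∑ i, ‖x ⬝ᵥ B i‖ ≤ C * ∑ j, ‖x j‖ :=
  calc ∑ i, ‖x ⬝ᵥ B i‖
    _ ≤ ∑ i, ∑ j, ‖x j‖ * ‖B i j‖ := by
      gcongr with i
      exact norm_sum_le_of_le _ fun j _ ↦ norm_mul_le _ _
    _ = ∑ j, (∑ i, ‖B i j‖) * ‖x j‖ := by
      rw [sum_comm]
      simp only [← mul_sum, mul_comm]
    _ ≤ ∑ j, C * ‖x j‖ := by
      gcongr with j
      exact hB j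
    _ = C * ∑ j, ‖x j‖ := (mul_sum _ _ _).symm

theorem inner_prod_by_length_general [DecidableEq R] {B : Matrix ι κ R} {x : κ → R} {d : ℕ}
    (hsparse : ∀ j, #{i | B i j ≠ 0} ≤ d)
    (hentry : ∀ i j, ‖B i j‖ ≤ √(∑ l, ‖x l‖ ^ 2)) :
    ∑ i, ‖x ⬝ᵥ B i‖ ≤ d * √(Fintype.card κ) * ∑ j, ‖x j‖ ^ 2 := by
  set s := √(∑ j, ‖x j‖ ^ 2)
  have column_bound (j : κ) : ∑ i, ‖B i j‖ ≤ d * s :=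
    (sum_norm_le_card_ne_zero_mul fun i _ ↦ hentry i j).trans (by gcongr; exact hsparse j)
  calc ∑ i, ‖x ⬝ᵥ B i‖
    _ ≤ d * s * ∑ j, ‖x j‖ := sum_norm_dotProduct_le_mul_sum_norm x column_bound
    _ ≤ d * s * (√(Fintype.card κ) * s) := by
      gcongr
      exact sum_le_sqrt_card_mul_sqrt_sum_sq univ (‖x ·‖)
    _ = d * √(Fintype.card κ) * s ^ 2 := by ring
    _ = d * √(Fintype.card κ) * ∑ j, ‖x j‖ ^ 2 := by
      rw [Real.sq_sqrt (sum_nonneg fun _ _ ↦ sq_nonneg _)]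

/-- For an `n × k` real matrix `B` whose every column has at most `k` nonzero entries, and a
vector `x ∈ ℝ^k` with `‖x‖₂ ≥ ‖b_i‖₂` for every row `b_i` of `B`, we have
`∑ i, |⟨x, b_i⟩| ≤ k^{3/2} · ‖x‖₂²`. -/
theorem inner_prod_by_length (n k : ℕ) (B : Matrix (Fin n) (Fin k) ℝ) (x : Fin k → ℝ)
    (hsparse : ∀ j, (Finset.univ.filter (fun i => B i j ≠ 0)).card ≤ k)
    (hx : ∀ i, Real.sqrt (∑ j, (B i j) ^ 2) ≤ Real.sqrt (∑ j, (x j) ^ 2)) :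
    ∑ i, |∑ j, x j * B i j| ≤ (k : ℝ) * Real.sqrt k * ∑ j, (x j) ^ 2 := by
  simpa [dotProduct] using inner_prod_by_length_general hsparse fun i j ↦
    (PiLp.norm_apply_le (WithLp.toLp 2 (B i)) j).trans <| by
      simpa [EuclideanSpace.norm_eq] using hx i
end

section
/- Let B be an n×k real matrix with rows b_1,…,b_n such that every column of B has at most k non-zero entries, and let x ∈ ℝ^k be a vector such that ‖x‖₂ ≥ ‖b_i‖₂ for all i ∈ {1,…,n}. Then ∑_{i=1}^n ⟨x, b_i⟩² ≤ k·‖x‖₂⁴. -/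
/-!
Cauchy–Schwarz restricted to the support of a row `b_i` gives
`⟨x, b_i⟩² ≤ (∑ j ∈ supp b_i, x_j²) ‖b_i‖²`. Summed over the rows, each `x_j²` is counted only
once per nonzero entry of column `j`.
-/

section DoubleCounting

variable {α β M : Type*} [AddCommMonoid M] [PartialOrder M] [IsOrderedAddMonoid M]

theorem sum_sum_bipartiteAbove_le_nsmul_sum (r : α → β → Prop) [∀ a b, Decidable (r a b)]
    {s : Finset α} {t : Finset β} {w : β → M} {d : ℕ} (hw : ∀ b ∈ t, 0 ≤ w b)
    (hd : ∀ b ∈ t, (s.bipartiteBelow r b).card ≤ d) :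
    ∑ a ∈ s, ∑ b ∈ t.bipartiteAbove r a, w b ≤ d • ∑ b ∈ t, w b :=
  calc ∑ a ∈ s, ∑ b ∈ t.bipartiteAbove r a, w b
      = ∑ b ∈ t, (s.bipartiteBelow r b).card • w b := by
        rw [Finset.sum_sum_bipartiteAbove_eq_sum_sum_bipartiteBelow]
        simp only [Finset.sum_const]
    _ ≤ ∑ b ∈ t, d • w b :=
        Finset.sum_le_sum fun b hb => nsmul_le_nsmul_left (hw b hb) (hd b hb)
    _ = d • ∑ b ∈ t, w b := (Finset.smul_sum ..).symm

end DoubleCounting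

section CauchySchwarz

variable {R : Type*} [CommSemiring R] [LinearOrder R] [IsStrictOrderedRing R] [ExistsAddOfLE R]

theorem sq_sum_mul_le_sum_filter_ne_zero_sq_mul_sum_sq {ι : Type*} (s : Finset ι) (f g : ι → R) :
    (∑ j ∈ s, f j * g j) ^ 2 ≤ (∑ j ∈ s with g j ≠ 0, f j ^ 2) * ∑ j ∈ s, g j ^ 2 :=
  calc (∑ j ∈ s, f j * g j) ^ 2
      = (∑ j ∈ s with g j ≠ 0, f j * g j) ^ 2 := by
        rw [Finset.sum_filter_of_ne fun j _ h => right_ne_zero_of_mul h]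
    _ ≤ (∑ j ∈ s with g j ≠ 0, f j ^ 2) * ∑ j ∈ s with g j ≠ 0, g j ^ 2 :=
        Finset.sum_mul_sq_le_sq_mul_sq _ f g
    _ = (∑ j ∈ s with g j ≠ 0, f j ^ 2) * ∑ j ∈ s, g j ^ 2 :=
        congrArg _ <| Finset.sum_filter_of_ne fun j _ h => (pow_ne_zero_iff two_ne_zero).mp h

theorem inner_prod_squared_by_length_general {m n : Type*} [Fintype m] [Fintype n]
    (b : m → n → R) (x : n → R) {d : ℕ} {c : R} (hc : 0 ≤ c)
    (hsparse : ∀ j, (Finset.univ.filter (fun i => b i j ≠ 0)).card ≤ d)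
    (hrow : ∀ i, ∑ j, b i j ^ 2 ≤ c) :
    ∑ i, (∑ j, x j * b i j) ^ 2 ≤ d * c * ∑ j, x j ^ 2 :=
  calc ∑ i, (∑ j, x j * b i j) ^ 2
      ≤ ∑ i, (∑ j with b i j ≠ 0, x j ^ 2) * c := by
        gcongr with i
        exact (sq_sum_mul_le_sum_filter_ne_zero_sq_mul_sum_sq _ x (b i)).trans <|
          mul_le_mul_of_nonneg_left (hrow i) (Finset.sum_nonneg fun j _ => sq_nonneg (x j))
    _ = (∑ i, ∑ j with b i j ≠ 0, x j ^ 2) * c := (Finset.sum_mul ..).symm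
    _ ≤ (d • ∑ j, x j ^ 2) * c := by
        gcongr
        exact sum_sum_bipartiteAbove_le_nsmul_sum (fun i j => b i j ≠ 0)
          (fun j _ => sq_nonneg (x j)) fun j _ => hsparse j
    _ = d * c * ∑ j, x j ^ 2 := by rw [nsmul_eq_mul, mul_right_comm]

end CauchySchwarz

/-- For an `n × k` real matrix `B` whose every column has at most `k` nonzero entries, and a
vector `x ∈ ℝ^k` with `‖x‖₂ ≥ ‖b_i‖₂` for every row `b_i` of `B`, we have
`∑ i, ⟨x, b_i⟩² ≤ k · ‖x‖₂⁴`. -/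
theorem inner_prod_squared_by_length (n k : ℕ) (B : Matrix (Fin n) (Fin k) ℝ) (x : Fin k → ℝ)
    (hsparse : ∀ j, (Finset.univ.filter (fun i => B i j ≠ 0)).card ≤ k)
    (hx : ∀ i, Real.sqrt (∑ j, (B i j) ^ 2) ≤ Real.sqrt (∑ j, (x j) ^ 2)) :
    ∑ i, (∑ j, x j * B i j) ^ 2 ≤ (k : ℝ) * (∑ j, (x j) ^ 2) ^ 2 := by
  have hnonneg : 0 ≤ ∑ j, x j ^ 2 := Finset.sum_nonneg fun j _ => sq_nonneg (x j)
  simpa only [sq (∑ j, x j ^ 2), mul_assoc] using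
    inner_prod_squared_by_length_general B x hnonneg hsparse
      fun i => (Real.sqrt_le_sqrt_iff hnonneg).mp (hx i)
end

section
/- Let W be a symmetric n×n real matrix with nonnegative entries and zero diagonal (representing edge weights of an undirected graph), and let L = D − W be the associated Laplacian, where D is the diagonal matrix with D_{uu} = ∑_v W_{uv}. Denote by l_1,…,l_n the rows of L, and assume every row of L has at most k non-zero entries. Then for every u ∈ {1,…,n}, ∑_{v : ‖l_v‖₂ ≤ ‖l_u‖₂} |⟨l_u, l_v⟩| ≤ 2k·‖l_u‖₂². -/
/-!
Swapping the order of summation bounds `∑ v, |⟨l_u, l_v⟩|` by the `ℓ¹` norm of `l_u` times the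
largest absolute column sum over the rows `l_v` that occur. A column has at most `k` nonzero
entries, each at most `‖l_v‖₂ ≤ ‖l_u‖₂`, so such a column sum is at most `k * ‖l_u‖₂`. The rows of
a Laplacian are diagonally dominant, so the `ℓ¹` norm of `l_u` is at most twice its diagonal
entry, hence at most `2 * ‖l_u‖₂`.
-/

section NormedSums

open Finset

variable {ι E : Type*}

theorem sum_norm_le_mul_of_card_ne_zero_le [SeminormedAddGroup E] [DecidableEq E]
    {s : Finset ι} {f : ι → E} {k : ℕ} {c : ℝ} (hc : 0 ≤ c) (hk : #{i ∈ s | f i ≠ 0} ≤ k)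
    (hf : ∀ i ∈ s, ‖f i‖ ≤ c) : ∑ i ∈ s, ‖f i‖ ≤ k * c :=
  calc ∑ i ∈ s, ‖f i‖ = ∑ i ∈ s with f i ≠ 0, ‖f i‖ :=
        (sum_filter_of_ne (p := (f · ≠ 0)) fun i _ => mt fun h => by rw [h, norm_zero]).symm
    _ ≤ #{i ∈ s | f i ≠ 0} * c := by
        simpa only [nsmul_eq_mul] using
          sum_le_card_nsmul _ _ _ fun i hi => hf i (mem_of_mem_filter i hi)
    _ ≤ k * c := by gcongr

variable [Fintype ι]

theorem norm_le_sqrt_sum_norm_sq [Norm E] (f : ι → E) (i : ι) :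
    ‖f i‖ ≤ √(∑ j, ‖f j‖ ^ 2) :=
  Real.le_sqrt_of_sq_le <|
    single_le_sum (f := fun j => ‖f j‖ ^ 2) (fun _ _ => sq_nonneg _) (mem_univ i)

theorem sum_norm_le_two_mul_sqrt_of_sum_erase_le [DecidableEq ι] [Norm E] {f : ι → E}
    {i : ι} (hf : ∑ j ∈ univ.erase i, ‖f j‖ ≤ ‖f i‖) :
    ∑ j, ‖f j‖ ≤ 2 * √(∑ j, ‖f j‖ ^ 2) := by
  rw [← add_sum_erase univ (fun j => ‖f j‖) (mem_univ i)]
  linarith [norm_le_sqrt_sum_norm_sq f i]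

end NormedSums

section RowProducts

open Finset

variable {m n R : Type*} [Fintype n] [NonUnitalSeminormedRing R]

theorem norm_dotProduct_le_sum_norm_mul_norm (x y : n → R) :
    ‖x ⬝ᵥ y‖ ≤ ∑ j, ‖x j‖ * ‖y j‖ :=
  norm_sum_le_of_le _ fun _ _ => norm_mul_le _ _

theorem sum_norm_dotProduct_row_le (x : n → R) (A : Matrix m n R) {s : Finset m} {c : ℝ}
    (hA : ∀ j, ∑ v ∈ s, ‖A v j‖ ≤ c) :
    ∑ v ∈ s, ‖x ⬝ᵥ A v‖ ≤ (∑ j, ‖x j‖) * c :=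
  calc ∑ v ∈ s, ‖x ⬝ᵥ A v‖ ≤ ∑ v ∈ s, ∑ j, ‖x j‖ * ‖A v j‖ :=
        sum_le_sum fun v _ => norm_dotProduct_le_sum_norm_mul_norm x (A v)
    _ = ∑ j, ‖x j‖ * ∑ v ∈ s, ‖A v j‖ := by
        simp only [mul_sum, sum_comm (s := s)]
    _ ≤ ∑ j, ‖x j‖ * c := by
        gcongr with j
        exact hA j
    _ = (∑ j, ‖x j‖) * c := (sum_mul _ _ _).symm

theorem laplacian_inner_prod_by_length_general [DecidableEq n] [DecidableEq R]
    (A : Matrix n n R) {k : ℕ} (hcol : ∀ j, #{v | A v j ≠ 0} ≤ k) {u : n}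
    (hdom : ∑ j ∈ univ.erase u, ‖A u j‖ ≤ ‖A u u‖) :
    ∑ v with √(∑ j, ‖A v j‖ ^ 2) ≤ √(∑ j, ‖A u j‖ ^ 2), ‖A u ⬝ᵥ A v‖ ≤
      2 * k * ∑ j, ‖A u j‖ ^ 2 := by
  set r := √(∑ j, ‖A u j‖ ^ 2)
  have hr : r ^ 2 = ∑ j, ‖A u j‖ ^ 2 := Real.sq_sqrt (sum_nonneg fun _ _ => sq_nonneg _)
  have hcolumn_sum (j : n) : ∑ v with √(∑ i, ‖A v i‖ ^ 2) ≤ r, ‖A v j‖ ≤ k * r := by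
    refine sum_norm_le_mul_of_card_ne_zero_le (Real.sqrt_nonneg _) ?_ fun v hv => ?_
    · exact (card_le_card (filter_subset_filter _ (subset_univ _))).trans (hcol j)
    · exact (norm_le_sqrt_sum_norm_sq (A v) j).trans (mem_filter.mp hv).2
  calc _ ≤ (∑ j, ‖A u j‖) * (k * r) := sum_norm_dotProduct_row_le (A u) A hcolumn_sum
    _ ≤ 2 * r * (k * r) := by
        gcongr
        exact sum_norm_le_two_mul_sqrt_of_sum_erase_le hdom
    _ = 2 * k * ∑ j, ‖A u j‖ ^ 2 := by rw [← hr]; ring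

end RowProducts

section WeightedLaplacian

variable {n R : Type*} [Fintype n] [DecidableEq n] [AddCommGroup R]

/-- The Laplacian `D - W` of the graph with weighted adjacency matrix `W`, where `D` is the
diagonal matrix of the row sums of `W`. A loop at `u` cancels: `W u u` does not contribute. -/
def weightedLaplacian (W : Matrix n n R) : Matrix n n R :=
  Matrix.diagonal (fun u => ∑ v, W u v) - W

namespace weightedLaplacian

theorem apply_self (W : Matrix n n R) (u : n) :
    weightedLaplacian W u u = ∑ v ∈ Finset.univ.erase u, W u v := by
  rw [weightedLaplacian, Matrix.sub_apply, Matrix.diagonal_apply_eq,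
    Finset.sum_erase_eq_sub (Finset.mem_univ u)]

theorem apply_of_ne (W : Matrix n n R) {u v : n} (huv : u ≠ v) :
    weightedLaplacian W u v = -W u v := by
  rw [weightedLaplacian, Matrix.sub_apply, Matrix.diagonal_apply_ne _ huv, zero_sub]

theorem isSymm {W : Matrix n n R} (hW : W.IsSymm) :
    (weightedLaplacian W).IsSymm :=
  (Matrix.isSymm_diagonal _).sub hW

theorem sum_erase_norm_le_norm_diag {W : Matrix n n ℝ} {u : n} (hW : ∀ v, 0 ≤ W u v) :
    ∑ v ∈ Finset.univ.erase u, ‖weightedLaplacian W u v‖ ≤ ‖weightedLaplacian W u u‖ :=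
  calc ∑ v ∈ Finset.univ.erase u, ‖weightedLaplacian W u v‖
      = ∑ v ∈ Finset.univ.erase u, W u v := Finset.sum_congr rfl fun v hv => by
        rw [apply_of_ne W (Finset.ne_of_mem_erase hv).symm, norm_neg,
          Real.norm_of_nonneg (hW v)]
    _ = weightedLaplacian W u u := (apply_self W u).symm
    _ ≤ ‖weightedLaplacian W u u‖ := Real.le_norm_self _

end weightedLaplacian

end WeightedLaplacian

/-- Let `W` be a symmetric `n × n` real matrix with nonnegative entries and zero diagonal,
and let `L = D − W` be the associated graph Laplacian (`L u v = -W u v` off the diagonal,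
`L u u = ∑ v, W u v`). If every row of `L` has at most `k` nonzero entries, then for every
`u`, the sum of `|⟨l_u, l_v⟩|` over rows `l_v` with `‖l_v‖₂ ≤ ‖l_u‖₂` is at most
`2k·‖l_u‖₂²`. -/
theorem laplacian_inner_prod_by_length (n k : ℕ) (W : Matrix (Fin n) (Fin n) ℝ)
    (hWsymm : ∀ u v, W u v = W v u) (hW0 : ∀ u v, 0 ≤ W u v) (hWdiag : ∀ u, W u u = 0)
    (L : Matrix (Fin n) (Fin n) ℝ)
    (hL : ∀ u v, L u v = if u = v then ∑ w, W u w else -W u v)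
    (hsparse : ∀ u, (Finset.univ.filter (fun j => L u j ≠ 0)).card ≤ k)
    (u : Fin n) :
    ∑ v ∈ Finset.univ.filter
        (fun v => Real.sqrt (∑ j, (L v j) ^ 2) ≤ Real.sqrt (∑ j, (L u j) ^ 2)),
      |∑ j, L u j * L v j| ≤ 2 * k * ∑ j, (L u j) ^ 2 := by
  obtain rfl : L = weightedLaplacian W := by
    ext u v
    rcases eq_or_ne u v with rfl | huv
    · rw [hL, if_pos rfl, weightedLaplacian.apply_self, Finset.sum_erase _ (hWdiag u)]
    · rw [hL, if_neg huv, weightedLaplacian.apply_of_ne W huv]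
  have hsymm : (weightedLaplacian W).IsSymm :=
    weightedLaplacian.isSymm (Matrix.IsSymm.ext fun u v => hWsymm v u)
  have hcol (j : Fin n) : (Finset.univ.filter fun v => weightedLaplacian W v j ≠ 0).card ≤ k := by
    simpa only [hsymm.apply j] using hsparse j
  simpa only [Real.norm_eq_abs, sq_abs, dotProduct] using
    laplacian_inner_prod_by_length_general (weightedLaplacian W) hcol
      (weightedLaplacian.sum_erase_norm_le_norm_diag (hW0 u))
end

section
/- Let 0 < α ≤ β be real constants. Let B be an n×k real matrix with rows b_1,…,b_n such that every entry of B is either zero or lies in the interval [α, β], and every column of B has at most k non-zero entries. Let x ∈ ℝ^k be a vector each of whose entries is either zero or lies in [α, β], and such that ‖x‖₂ ≥ ‖b_i‖₂ for all i ∈ {1,…,n}. Then ∑_{i=1}^n |⟨x, b_i⟩| ≤ k·(β/α)·‖x‖₂². -/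
/-!
Regard `B` as an operator from `ℓ¹(ℝᵏ)` to `ℓ¹(ℝⁿ)`: its norm is the largest `ℓ¹` norm of a column,
which is at most `k * β` by sparsity. On the other side `‖x‖₁ ≤ ‖x‖₂² / α`, because each nonzero
entry of `x` is at least `α` in absolute value.
-/

open scoped Finset Matrix

section OrderedGroup

variable {G : Type*} [AddCommGroup G] [LinearOrder G] [IsOrderedAddMonoid G]

theorem abs_le_of_eq_zero_or_between {a b t : G} (ha : 0 ≤ a) (hab : a ≤ b)
    (ht : t = 0 ∨ (a ≤ t ∧ t ≤ b)) : |t| ≤ b := by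
  rcases ht with rfl | ⟨hat, htb⟩
  · simpa only [abs_zero] using ha.trans hab
  · rwa [abs_of_nonneg (ha.trans hat)]

theorem sum_abs_le_card_ne_zero_nsmul {ι : Type*} (s : Finset ι) (f : ι → G) {b : G}
    (hf : ∀ i ∈ s, |f i| ≤ b) : ∑ i ∈ s, |f i| ≤ #{i ∈ s | f i ≠ 0} • b :=
  calc ∑ i ∈ s, |f i| = ∑ i ∈ s with f i ≠ 0, |f i| :=
        (Finset.sum_filter_of_ne fun _ _ hi => abs_ne_zero.mp hi).symm
    _ ≤ #{i ∈ s | f i ≠ 0} • b :=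
        Finset.sum_le_card_nsmul _ _ _ fun i hi => hf i (Finset.mem_of_mem_filter i hi)

end OrderedGroup

theorem sum_abs_mulVec_le {m n R : Type*} [Fintype m] [Fintype n] [Ring R] [LinearOrder R]
    [IsOrderedRing R] (A : Matrix m n R) (x : n → R) {C : R} (hA : ∀ j, ∑ i, |A i j| ≤ C) :
    ∑ i, |(A *ᵥ x) i| ≤ C * ∑ j, |x j| :=
  calc ∑ i, |(A *ᵥ x) i| ≤ ∑ i, ∑ j, |A i j * x j| :=
        Finset.sum_le_sum fun _ _ => Finset.abs_sum_le_sum_abs _ _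
    _ = ∑ j, (∑ i, |A i j|) * |x j| := by
        simp only [abs_mul, Finset.sum_mul]
        exact Finset.sum_comm
    _ ≤ ∑ j, C * |x j| :=
        Finset.sum_le_sum fun j _ => mul_le_mul_of_nonneg_right (hA j) (abs_nonneg _)
    _ = C * ∑ j, |x j| := (Finset.mul_sum _ _ _).symm

section Field

variable {K : Type*} [Field K] [LinearOrder K] [IsStrictOrderedRing K]

theorem abs_le_sq_div_of_eq_zero_or_le_abs {a t : K} (ha : 0 < a) (ht : t = 0 ∨ a ≤ |t|) :
    |t| ≤ t ^ 2 / a := by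
  rcases ht with rfl | hat
  · simp
  · rw [le_div_iff₀ ha, ← sq_abs, sq]
    exact mul_le_mul_of_nonneg_left hat (abs_nonneg t)

theorem constants_inner_prod_by_length_general {m n : Type*} [Fintype m] [Fintype n] {s : ℕ}
    {α β : K} (hα : 0 < α) (hβ : 0 ≤ β) (B : Matrix m n K) (x : n → K)
    (hB : ∀ i j, |B i j| ≤ β) (hsparse : ∀ j, #{i | B i j ≠ 0} ≤ s)
    (hx : ∀ j, x j = 0 ∨ α ≤ |x j|) :
    ∑ i, |(B *ᵥ x) i| ≤ s * (β / α) * ∑ j, x j ^ 2 := by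
  have hcol (j : n) : ∑ i, |B i j| ≤ s * β :=
    calc ∑ i, |B i j| ≤ #{i | B i j ≠ 0} • β :=
          sum_abs_le_card_ne_zero_nsmul _ _ fun i _ => hB i j
      _ ≤ s • β := nsmul_le_nsmul_left hβ (hsparse j)
      _ = s * β := nsmul_eq_mul s β
  have hnorm : ∑ j, |x j| ≤ (∑ j, x j ^ 2) / α := by
    rw [Finset.sum_div]
    exact Finset.sum_le_sum fun j _ => abs_le_sq_div_of_eq_zero_or_le_abs hα (hx j)
  calc ∑ i, |(B *ᵥ x) i| ≤ s * β * ∑ j, |x j| := sum_abs_mulVec_le B x hcol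
    _ ≤ s * β * ((∑ j, x j ^ 2) / α) := mul_le_mul_of_nonneg_left hnorm (by positivity)
    _ = s * (β / α) * ∑ j, x j ^ 2 := by ring

end Field

/-- Let `0 < α ≤ β`. If `B` is an `n × k` real matrix whose entries are each zero or in
`[α, β]`, every column of `B` has at most `k` nonzero entries, and `x ∈ ℝ^k` has entries each
zero or in `[α, β]` with `‖x‖₂ ≥ ‖b_i‖₂` for every row `b_i` of `B`, then
`∑ i, |⟨x, b_i⟩| ≤ k·(β/α)·‖x‖₂²`. -/
theorem constants_inner_prod_by_length (n k : ℕ) (α β : ℝ) (hα : 0 < α) (hαβ : α ≤ β)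
    (B : Matrix (Fin n) (Fin k) ℝ) (x : Fin k → ℝ)
    (hB : ∀ i j, B i j = 0 ∨ (α ≤ B i j ∧ B i j ≤ β))
    (hsparse : ∀ j, (Finset.univ.filter (fun i => B i j ≠ 0)).card ≤ k)
    (hxrange : ∀ j, x j = 0 ∨ (α ≤ x j ∧ x j ≤ β))
    (hx : ∀ i, Real.sqrt (∑ j, (B i j) ^ 2) ≤ Real.sqrt (∑ j, (x j) ^ 2)) :
    ∑ i, |∑ j, x j * B i j| ≤ (k : ℝ) * (β / α) * ∑ j, (x j) ^ 2 := by
  simpa only [Matrix.mulVec, dotProduct, mul_comm (B _ _)] using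
    constants_inner_prod_by_length_general hα (hα.le.trans hαβ) B x
      (fun i j => abs_le_of_eq_zero_or_between hα.le hαβ (hB i j)) hsparse
      fun j => (hxrange j).imp_right fun h => h.1.trans (le_abs_self _)
end

section
/- Let p be a positive integer divisible by 4 and let t ≥ 2 be an even integer. For each integer l with 0 ≤ l ≤ t, define r₁(l) = √( ((t²+1) + √((t²−1)² + 4lt)) / 2 ) and r₂(l) = √( ((t²+1) − √((t²−1)² + 4lt)) / 2 ). Then ∑_{l=0}^{t} (−1)^l · C(t,l) · ( (l−1) + r₁(l)^p + r₂(l)^p ) ≠ 0 if and only if t ≤ p/4. -/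
/-!
Write `p = 2k` and put `x = l + (t² - 1)² / (4t)`. Then `(t² - 1)² + 4lt = 4tx`, and the odd powers
of the inner square root cancel in `r₁(l)^(2k) + r₂(l)^(2k)`, which leaves a polynomial of degree
`⌊k/2⌋` in `x` with positive coefficients. Up to sign the alternating sum is the `t`-th forward
difference of this polynomial at a positive point: it vanishes when `⌊k/2⌋ < t`, and otherwise it is
positive, since the difference `(x + 1)ⁿ - xⁿ` again has positive coefficients.
-/

open Finset

section AlternatingSum

variable {R : Type*} [CommRing R]

theorem sum_neg_one_pow_mul_choose_mul_eq_fwdDiff_iter (f : R → R) (t : ℕ) (y : R) :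
    ∑ l ∈ range (t + 1), (-1) ^ l * (t.choose l : R) * f (l + y) =
      (-1) ^ t * (fwdDiff 1)^[t] f y := by
  rw [fwdDiff_iter_eq_sum_shift, mul_sum]
  refine sum_congr rfl fun l hl ↦ ?_
  have h_sign : (-1 : R) ^ l = (-1) ^ t * (-1) ^ (t - l) := by
    obtain ⟨m, rfl⟩ := Nat.exists_eq_add_of_le (mem_range_succ_iff.mp hl)
    rw [Nat.add_sub_cancel_left, pow_add, mul_assoc, ← mul_pow, neg_one_mul, neg_neg, one_pow,
      mul_one]
  rw [h_sign, nsmul_one, zsmul_eq_mul, add_comm y]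
  push_cast
  ring

theorem sum_neg_one_pow_mul_choose_mul_sub_eq_zero {t : ℕ} (ht : 1 < t) (c : R) :
    ∑ l ∈ range (t + 1), (-1) ^ l * (t.choose l : R) * (l - c) = 0 := by
  have h_deg : (Polynomial.X - Polynomial.C c).natDegree < t :=
    (Polynomial.natDegree_X_sub_C_le c).trans_lt ht
  have h_sum := sum_neg_one_pow_mul_choose_mul_eq_fwdDiff_iter
    (fun r ↦ (Polynomial.X - Polynomial.C c).eval r) t 0
  rw [Polynomial.fwdDiff_iter_eq_zero_of_degree_lt h_deg] at h_sum
  simpa only [Polynomial.eval_sub, Polynomial.eval_X, Polynomial.eval_C, add_zero, Pi.zero_apply,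
    mul_zero] using h_sum

end AlternatingSum

section ForwardDifference

variable {R : Type*} [CommRing R]

theorem fwdDiff_iter_sum_mul_pow_apply (s : Finset ℕ) (c : ℕ → R) (t : ℕ) (x : R) :
    (fwdDiff 1)^[t] (fun r ↦ ∑ j ∈ s, c j * r ^ j) x =
      ∑ j ∈ s, c j * (fwdDiff 1)^[t] (fun r ↦ r ^ j) x := by
  have h_sum : (fun r ↦ ∑ j ∈ s, c j * r ^ j) = ∑ j ∈ s, c j • fun r : R ↦ r ^ j := by
    ext r
    simp
  simp only [h_sum, fwdDiff_iter_finsetSum, fwdDiff_iter_const_smul, Finset.sum_apply,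
    Pi.smul_apply, smul_eq_mul]

theorem fwdDiff_iter_succ_pow_apply (t n : ℕ) (x : R) :
    (fwdDiff 1)^[t + 1] (fun r ↦ r ^ n) x =
      ∑ i ∈ range n, (n.choose i : R) * (fwdDiff 1)^[t] (fun r ↦ r ^ i) x := by
  have h_diff : fwdDiff 1 (fun r : R ↦ r ^ n) =
      fun r ↦ ∑ i ∈ range n, (n.choose i : R) * r ^ i := by
    ext r
    simp [fwdDiff, add_pow, sum_range_succ, mul_comm]
  rw [Function.iterate_succ_apply, h_diff, fwdDiff_iter_sum_mul_pow_apply]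

variable [PartialOrder R] [IsStrictOrderedRing R] {x : R}

theorem fwdDiff_iter_pow_nonneg (hx : 0 ≤ x) (t n : ℕ) : 0 ≤ (fwdDiff 1)^[t] (fun r ↦ r ^ n) x := by
  induction t generalizing n with
  | zero => exact pow_nonneg hx n
  | succ t ih =>
    rw [fwdDiff_iter_succ_pow_apply]
    exact sum_nonneg fun i _ ↦ mul_nonneg (Nat.cast_nonneg _) (ih i)

theorem fwdDiff_iter_pow_pos (hx : 0 < x) {t n : ℕ} (h : t ≤ n) :
    0 < (fwdDiff 1)^[t] (fun r ↦ r ^ n) x := by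
  induction t generalizing n with
  | zero => exact pow_pos hx n
  | succ t ih =>
    rw [fwdDiff_iter_succ_pow_apply]
    refine sum_pos' (fun i _ ↦ mul_nonneg (Nat.cast_nonneg _) (fwdDiff_iter_pow_nonneg hx.le t i))
      ⟨t, mem_range.mpr h, mul_pos ?_ (ih le_rfl)⟩
    exact_mod_cast Nat.choose_pos (Nat.le_of_succ_le h)

theorem fwdDiff_iter_sum_mul_pow_ne_zero_iff {n : ℕ} {c : ℕ → R} (hc : ∀ j < n, 0 ≤ c j)
    (hcn : 0 < c n) (hx : 0 < x) (t : ℕ) :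
    (fwdDiff 1)^[t] (fun r ↦ ∑ j ∈ range (n + 1), c j * r ^ j) x ≠ 0 ↔ t ≤ n := by
  rw [fwdDiff_iter_sum_mul_pow_apply]
  refine ⟨fun h ↦ ?_, fun h ↦ ne_of_gt ?_⟩
  · contrapose! h
    refine sum_eq_zero fun j hj ↦ ?_
    rw [fwdDiff_iter_pow_eq_zero_of_lt ((mem_range_succ_iff.mp hj).trans_lt h), Pi.zero_apply,
      mul_zero]
  · rw [sum_range_succ]
    exact add_pos_of_nonneg_of_pos
      (sum_nonneg fun j hj ↦
        mul_nonneg (hc j (mem_range.mp hj)) (fwdDiff_iter_pow_nonneg hx.le t j))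
      (mul_pos hcn (fwdDiff_iter_pow_pos hx h))

end ForwardDifference

section PowerSum

theorem add_pow_add_sub_pow {R : Type*} [CommRing R] (x y : R) (k : ℕ) :
    (x + y) ^ k + (x - y) ^ k =
      ∑ j ∈ range (k / 2 + 1), 2 * (k.choose (2 * j) : R) * x ^ (k - 2 * j) * (y ^ 2) ^ j := by
  rw [add_comm x, sub_eq_neg_add, add_pow, add_pow, ← sum_add_distrib]
  refine (sum_of_injOn (2 * ·) (mul_right_injective₀ two_ne_zero).injOn
    (fun j hj ↦ ?_) (fun i hi h_notMem ↦ ?_) fun j _ ↦ ?_).symm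
  · simp only [coe_range, Set.mem_Iio] at hj ⊢
    omega
  · have h_odd : Odd i := by
      rw [← Nat.not_even_iff_odd]
      rintro ⟨j, rfl⟩
      refine h_notMem ⟨j, ?_, two_mul j⟩
      simp only [coe_range, Set.mem_Iio, mem_range] at hi ⊢
      omega
    rw [h_odd.neg_pow]
    ring
  · rw [(even_two_mul j).neg_pow, pow_mul]
    ring

theorem sqrt_half_add_pow_add_sqrt_half_sub_pow {s D : ℝ} (hD : 0 ≤ D) (hDs : √D ≤ s) (k : ℕ) :
    √((s + √D) / 2) ^ (2 * k) + √((s - √D) / 2) ^ (2 * k) =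
      ∑ j ∈ range (k / 2 + 1),
        2 * (k.choose (2 * j) : ℝ) * (s / 2) ^ (k - 2 * j) * (D / 4) ^ j := by
  have h_add : 0 ≤ (s + √D) / 2 := by linarith [Real.sqrt_nonneg D]
  have h_sub : 0 ≤ (s - √D) / 2 := by linarith
  have h_sq : (√D / 2) ^ 2 = D / 4 := by
    rw [div_pow, Real.sq_sqrt hD]
    norm_num
  rw [pow_mul, pow_mul, Real.sq_sqrt h_add, Real.sq_sqrt h_sub, add_div, sub_div,
    add_pow_add_sub_pow, h_sq]

end PowerSum

section SingularValues

/-- The coefficient of `x ^ j` in `r₁(l)^(2k) + r₂(l)^(2k)`, viewed as a polynomial in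
`x = l + singularShift t`. -/
noncomputable def singularCoeff (k t j : ℕ) : ℝ :=
  2 * k.choose (2 * j) * (((t : ℝ) ^ 2 + 1) / 2) ^ (k - 2 * j) * t ^ j

/-- The shift for which, when `t > 0`, the discriminant `(t² - 1)² + 4lt` is the multiple
`4t * (l + singularShift t)` of a single variable. -/
noncomputable def singularShift (t : ℕ) : ℝ :=
  ((t : ℝ) ^ 2 - 1) ^ 2 / (4 * t)

theorem singularCoeff_nonneg (k t j : ℕ) : 0 ≤ singularCoeff k t j := by
  unfold singularCoeff
  positivity

theorem singularCoeff_pos {k t j : ℕ} (ht : 0 < t) (hj : 2 * j ≤ k) : 0 < singularCoeff k t j := by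
  have h_choose : 0 < k.choose (2 * j) := Nat.choose_pos hj
  unfold singularCoeff
  positivity

theorem singularShift_pos {t : ℕ} (ht : 1 < t) : 0 < singularShift t := by
  have h_sq : 0 < (t : ℝ) ^ 2 - 1 :=
    sub_pos.mpr (one_lt_pow₀ (Nat.one_lt_cast.mpr ht) two_ne_zero)
  unfold singularShift
  positivity

theorem sqrt_discriminant_le {l t : ℝ} (ht : 0 ≤ t) (hl : l ≤ t) :
    √((t ^ 2 - 1) ^ 2 + 4 * l * t) ≤ t ^ 2 + 1 := by
  have h_mul : l * t ≤ t * t := by gcongr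
  exact Real.sqrt_le_iff.mpr ⟨by positivity, by linarith⟩

theorem singularValue_pow_add_pow {l t : ℕ} (ht : 0 < t) (hl : l ≤ t) (k : ℕ) :
    √(((t : ℝ) ^ 2 + 1 + √(((t : ℝ) ^ 2 - 1) ^ 2 + 4 * l * t)) / 2) ^ (2 * k) +
        √(((t : ℝ) ^ 2 + 1 - √(((t : ℝ) ^ 2 - 1) ^ 2 + 4 * l * t)) / 2) ^ (2 * k) =
      ∑ j ∈ range (k / 2 + 1), singularCoeff k t j * (l + singularShift t) ^ j := by
  have h_disc : (((t : ℝ) ^ 2 - 1) ^ 2 + 4 * l * t) / 4 = t * (l + singularShift t) := by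
    unfold singularShift
    field_simp
    ring
  rw [sqrt_half_add_pow_add_sqrt_half_sub_pow (by positivity)
    (sqrt_discriminant_le t.cast_nonneg (Nat.cast_le.mpr hl)), h_disc]
  simp only [singularCoeff, mul_pow, mul_assoc]

end SingularValues

theorem gap_condition_iff_general (p t : ℕ) (hp : Even p) (ht : 2 ≤ t) :
    (∑ l ∈ Finset.range (t + 1), (-1 : ℝ) ^ l * (t.choose l) *
        (((l : ℝ) - 1)
          + Real.sqrt ((((t : ℝ) ^ 2 + 1) +
              Real.sqrt (((t : ℝ) ^ 2 - 1) ^ 2 + 4 * l * t)) / 2) ^ p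
          + Real.sqrt ((((t : ℝ) ^ 2 + 1) -
              Real.sqrt (((t : ℝ) ^ 2 - 1) ^ 2 + 4 * l * t)) / 2) ^ p)) ≠ 0 ↔
      4 * t ≤ p := by
  obtain ⟨k, rfl⟩ := even_iff_exists_two_mul.mp hp
  let F : ℝ → ℝ := fun x ↦ ∑ j ∈ range (k / 2 + 1), singularCoeff k t j * x ^ j
  have h_diff : (fwdDiff 1)^[t] F (singularShift t) ≠ 0 ↔ t ≤ k / 2 :=
    fwdDiff_iter_sum_mul_pow_ne_zero_iff (fun j _ ↦ singularCoeff_nonneg k t j)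
      (singularCoeff_pos (by omega) (Nat.mul_div_le k 2)) (singularShift_pos ht) t
  rw [sum_congr rfl fun l hl ↦ by
      rw [add_assoc, singularValue_pow_add_pow (by omega) (mem_range_succ_iff.mp hl), mul_add],
    sum_add_distrib, sum_neg_one_pow_mul_choose_mul_sub_eq_zero ht, zero_add,
    sum_neg_one_pow_mul_choose_mul_eq_fwdDiff_iter F, mul_ne_zero_iff_left (by simp), h_diff]
  omega

/-- For `p` a positive multiple of `4` and even `t ≥ 2`, with
`r₁(l) = √(((t²+1) + √((t²−1)²+4lt))/2)` and `r₂(l) = √(((t²+1) − √((t²−1)²+4lt))/2)`,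
the alternating sum `∑_{l=0}^t (−1)^l·C(t,l)·((l−1) + r₁(l)^p + r₂(l)^p)` is nonzero
if and only if `t ≤ p/4`. -/
theorem gap_condition_iff (p t : ℕ) (hp : 0 < p) (hp4 : 4 ∣ p)
    (ht : 2 ≤ t) (hteven : Even t) :
    (∑ l ∈ Finset.range (t + 1), (-1 : ℝ) ^ l * (t.choose l) *
        (((l : ℝ) - 1)
          + Real.sqrt ((((t : ℝ) ^ 2 + 1) +
              Real.sqrt (((t : ℝ) ^ 2 - 1) ^ 2 + 4 * l * t)) / 2) ^ p
          + Real.sqrt ((((t : ℝ) ^ 2 + 1) -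
              Real.sqrt (((t : ℝ) ^ 2 - 1) ^ 2 + 4 * l * t)) / 2) ^ p)) ≠ 0 ↔
      4 * t ≤ p :=
  gap_condition_iff_general p t (even_iff_two_dvd.mpr (dvd_trans (by norm_num) hp4)) ht
end
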